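/- arXiv:2112.02284 — 2 statements merged into one kernel-verified Lean document; each statement's English description precedes it below -/
import Mathlib

section
/- Let X be a real random variable with X ≥ 0 a.s. and let Y be an integrable real random variable such that X + Y ≥ 0 a.s. Then the right directional derivative of h at X in direction Y exists and equals E[h′(X)·Y]; that is, lim_{t↓0} (h(X + tY) − h(X))/t = E[h′(X)·Y]. -/
open MeasureTheory Filter Set
open scoped ENNReal

noncomputable section

variable {Ω : Type*} [MeasurableSpace Ω]

/-- Entropic risk measure `h_a(X) = (1/a) log E[e^{-aX}]`. -/
def entropic (P : Measure Ω) (a : ℝ) (X : Ω → ℝ) : ℝ :=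
  (1 / a) * Real.log (∫ ω, Real.exp (-a * X ω) ∂P)

/-- Weighted entropic risk measure `h(X) = ∫_{[a₀,a₁]} h_a(X) m(da)`. -/
def werm (P : Measure Ω) (m : Measure ℝ) (a₀ a₁ : ℝ) (X : Ω → ℝ) : ℝ :=
  ∫ a in Set.Icc a₀ a₁, entropic P a X ∂m

/-- Marginal risk density transform `h′(X) = -∫_{[a₀,a₁]} e^{-aX}/E[e^{-aX}] m(da)`. -/
def hprime (P : Measure Ω) (m : Measure ℝ) (a₀ a₁ : ℝ) (X : Ω → ℝ) (ω : Ω) : ℝ :=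
  -∫ a in Set.Icc a₀ a₁, Real.exp (-a * X ω) / (∫ ω', Real.exp (-a * X ω') ∂P) ∂m

/-- Extended-real-valued expectation `E[f] = ∫ f⁺ - ∫ f⁻ ∈ [-∞,∞]`. -/
def eint (P : Measure Ω) (f : Ω → ℝ) : EReal :=
  ((∫⁻ ω, ENNReal.ofReal (f ω) ∂P : ℝ≥0∞) : EReal)
    - ((∫⁻ ω, ENNReal.ofReal (-(f ω)) ∂P : ℝ≥0∞) : EReal)

/-- `E[ρX] ∈ [0,∞]` for a nonnegative payoff. -/
def budget (P : Measure Ω) (ρ X : Ω → ℝ) : ℝ≥0∞ := ∫⁻ ω, ENNReal.ofReal (ρ ω * X ω) ∂P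

/-- `X ∈ L⁰₊`: a nonnegative random variable. -/
def Lpos (P : Measure Ω) (X : Ω → ℝ) : Prop := Measurable X ∧ ∀ᵐ ω ∂P, 0 ≤ X ω

/-- Objective of the Lagrangian risk-minimization problem: `h(X) + λ E[ρX]`. -/
def robj (P : Measure Ω) (m : Measure ℝ) (a₀ a₁ : ℝ) (ρ : Ω → ℝ) (lam : ℝ) (X : Ω → ℝ) : EReal :=
  ((werm P m a₀ a₁ X : ℝ) : EReal) + (lam : EReal) * ((budget P ρ X : ℝ≥0∞) : EReal)

/-- `ψ_X(y) = ∫_{[a₀,a₁]} e^{-ay} / E[e^{-aX}] m(da)`. -/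
def psi (P : Measure Ω) (m : Measure ℝ) (a₀ a₁ : ℝ) (X : Ω → ℝ) (y : ℝ) : ℝ :=
  ∫ a in Set.Icc a₀ a₁, Real.exp (-a * y) / (∫ ω, Real.exp (-a * X ω) ∂P) ∂m

/-- Inverse of `ψ_X` on `(0,∞)` (realized via `sSup`, since `ψ_X` is continuous, strictly
decreasing with limits `∞` at `-∞` and `0` at `∞`). -/
def psiInv (P : Measure Ω) (m : Measure ℝ) (a₀ a₁ : ℝ) (X : Ω → ℝ) (z : ℝ) : ℝ :=
  sSup {y : ℝ | z ≤ psi P m a₀ a₁ X y}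

/-- The transform `𝐓X = max(ψ_X⁻¹(λρ), 0)`. -/
def Ttrans (P : Measure Ω) (m : Measure ℝ) (a₀ a₁ lam : ℝ) (ρ : Ω → ℝ) (X : Ω → ℝ) : Ω → ℝ :=
  fun ω => max (psiInv P m a₀ a₁ X (lam * ρ ω)) 0

/-- `X ∈ 𝒳(x)`: nonnegative and `E[ρX] ≤ x`. -/
def feasible (P : Measure Ω) (ρ : Ω → ℝ) (x : ℝ) (X : Ω → ℝ) : Prop :=
  Lpos P X ∧ budget P ρ X ≤ ENNReal.ofReal x

/-- `γ₁(x)`: the minimal value of `h` over `𝒳(x)`. -/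
def gamma1 (P : Measure Ω) (m : Measure ℝ) (a₀ a₁ : ℝ) (ρ : Ω → ℝ) (x : ℝ) : ℝ :=
  sInf (werm P m a₀ a₁ '' {X | feasible P ρ x X})

/-- Expected utility `E[U(X)] ∈ [-∞,∞]`. -/
def eutil (P : Measure Ω) (U : ℝ → ℝ) (X : Ω → ℝ) : EReal := eint P (fun ω => U (X ω))

/-- Full Lagrangian objective `E[U(X)] - μ h(X) - λ E[ρX]`. -/
def fullObj (P : Measure Ω) (m : Measure ℝ) (a₀ a₁ : ℝ) (ρ : Ω → ℝ) (U : ℝ → ℝ)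
    (μ lam : ℝ) (X : Ω → ℝ) : EReal :=
  eutil P U X - ((μ * werm P m a₀ a₁ X : ℝ) : EReal)
    - (lam : EReal) * ((budget P ρ X : ℝ≥0∞) : EReal)

/-!
Let `Q_a` be the Esscher measure with density `e^{-aX} / E[e^{-aX}]`. Then
`h_a(X + tY) - h_a(X) = a⁻¹ log E_{Q_a}[e^{-atY}]` is, up to the factor `a⁻¹`, the cumulant
generating function `K_a(t)` of `-aY` under `Q_a`. Jensen's inequality, for `exp` and for
`u ↦ u ^ t`, gives
`E_{Q_a}[-aY] ≤ K_a(t) / t ≤ K_a(1)` for `0 < t ≤ 1`,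
and `log u ≤ u - 1` together with dominated convergence shows that `K_a(t) / t` tends to the left
end as `t ↓ 0`. Hence the difference quotients of `h_a` tend to `-E_{Q_a}[Y]` and stay between
`-E_{Q_a}[Y]` and `h_a(X + Y) - h_a(X)`. Both bounds are continuous in `a ∈ [a₀, a₁]`, so dominated
convergence applies to the integral over `a`, and Fubini's theorem identifies the limit.
-/

section CumulantGeneratingFunction

open ProbabilityTheory

lemma le_exp_mul_sub_one_div {t : ℝ} (ht : 0 < t) (z : ℝ) : z ≤ (Real.exp (t * z) - 1) / t := by
  rw [le_div_iff₀ ht]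
  linarith [Real.add_one_le_exp (t * z)]

lemma exp_mul_sub_one_div_le {t : ℝ} (ht : t ∈ Ioc 0 1) (z : ℝ) :
    (Real.exp (t * z) - 1) / t ≤ Real.exp z - 1 := by
  have hconv := convexOn_exp.2 (mem_univ z) (mem_univ 0) ht.1.le (sub_nonneg.2 ht.2)
    (add_sub_cancel t 1)
  simp only [smul_eq_mul, mul_zero, add_zero, Real.exp_zero, mul_one] at hconv
  rw [div_le_iff₀ ht.1]
  linarith

variable {Q : Measure Ω} {Z : Ω → ℝ}

lemma integrable_exp_mul_of_mem_Ioc [IsFiniteMeasure Q] {t : ℝ} (ht : t ∈ Ioc 0 1)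
    (hexp : Integrable (fun ω => Real.exp (Z ω)) Q) :
    Integrable (fun ω => Real.exp (t * Z ω)) Q :=
  integrable_exp_mul_of_nonneg_of_le (by simpa only [one_mul] using hexp) ht.1.le ht.2

variable [IsProbabilityMeasure Q]

lemma mul_integral_le_cgf {t : ℝ} (hZ : Integrable Z Q)
    (hexp : Integrable (fun ω => Real.exp (t * Z ω)) Q) : t * ∫ ω, Z ω ∂Q ≤ cgf Z Q t := by
  have jensen := convexOn_exp.map_integral_le Real.continuous_exp.continuousOn isClosed_univ
    (ae_of_all Q fun ω => mem_univ (t * Z ω)) (hZ.const_mul t) hexp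
  rw [integral_const_mul] at jensen
  exact (Real.le_log_iff_exp_le (mgf_pos hexp)).2 jensen

lemma integral_le_cgf_div {t : ℝ} (ht : 0 < t) (hZ : Integrable Z Q)
    (hexp : Integrable (fun ω => Real.exp (t * Z ω)) Q) : ∫ ω, Z ω ∂Q ≤ cgf Z Q t / t := by
  rw [le_div_iff₀' ht]
  exact mul_integral_le_cgf hZ hexp

lemma cgf_div_le_cgf_one {t : ℝ} (ht : t ∈ Ioc 0 1)
    (hexp : Integrable (fun ω => Real.exp (Z ω)) Q) : cgf Z Q t / t ≤ cgf Z Q 1 := by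
  have hexp_one : Integrable (fun ω => Real.exp (1 * Z ω)) Q := by simpa only [one_mul] using hexp
  have hexp_t := integrable_exp_mul_of_mem_Ioc ht hexp
  have hpow (ω : Ω) : Real.exp (Z ω) ^ t = Real.exp (t * Z ω) := by rw [← Real.exp_mul, mul_comm]
  have jensen : mgf Z Q t ≤ mgf Z Q 1 ^ t := by
    have := (Real.concaveOn_rpow ht.1.le ht.2).le_map_integral
      (Real.continuous_rpow_const ht.1.le).continuousOn isClosed_Ici
      (ae_of_all Q fun ω => (Real.exp_pos (Z ω)).le) hexp
      (hexp_t.congr (ae_of_all Q fun ω => (hpow ω).symm))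
    simpa only [hpow, mgf, one_mul] using this
  rw [div_le_iff₀' ht.1]
  calc cgf Z Q t ≤ Real.log (mgf Z Q 1 ^ t) := Real.log_le_log (mgf_pos hexp_t) jensen
    _ = t * cgf Z Q 1 := Real.log_rpow (mgf_pos hexp_one) t

lemma tendsto_mgf_sub_one_div (hZ : Integrable Z Q)
    (hexp : Integrable (fun ω => Real.exp (Z ω)) Q) :
    Tendsto (fun t => (mgf Z Q t - 1) / t) (nhdsWithin 0 (Ioi 0)) (nhds (∫ ω, Z ω ∂Q)) := by
  have hunit : ∀ᶠ t : ℝ in nhdsWithin 0 (Ioi 0), t ∈ Ioc 0 1 := Ioc_mem_nhdsGT one_pos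
  have hlim : Tendsto (fun t => ∫ ω, (Real.exp (t * Z ω) - 1) / t ∂Q)
      (nhdsWithin 0 (Ioi 0)) (nhds (∫ ω, Z ω ∂Q)) := by
    refine tendsto_integral_filter_of_dominated_convergence (fun ω => |Z ω| + Real.exp (Z ω))
      (.of_forall fun t => ?_) ?_ (hZ.abs.add hexp) (ae_of_all Q fun ω => ?_)
    · have := hZ.aemeasurable
      fun_prop
    · filter_upwards [hunit] with t ht
      refine ae_of_all Q fun ω => abs_le.2 ⟨?_, ?_⟩
      · linarith [le_exp_mul_sub_one_div ht.1 (Z ω), neg_abs_le (Z ω), Real.exp_pos (Z ω)]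
      · linarith [exp_mul_sub_one_div_le ht (Z ω), abs_nonneg (Z ω)]
    · have hderiv : HasDerivAt (fun t : ℝ => Real.exp (t * Z ω)) (Z ω) 0 := by
        simpa using (hasDerivAt_mul_const (Z ω) (x := (0 : ℝ))).exp
      simpa [div_eq_inv_mul] using hderiv.tendsto_slope_zero_right
  refine hlim.congr' ?_
  filter_upwards [hunit] with t ht
  rw [integral_div, integral_sub (integrable_exp_mul_of_mem_Ioc ht hexp) (integrable_const 1),
    integral_const, probReal_univ, one_smul, mgf]

lemma tendsto_cgf_div (hZ : Integrable Z Q) (hexp : Integrable (fun ω => Real.exp (Z ω)) Q) :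
    Tendsto (fun t => cgf Z Q t / t) (nhdsWithin 0 (Ioi 0)) (nhds (∫ ω, Z ω ∂Q)) := by
  have hunit : ∀ᶠ t : ℝ in nhdsWithin 0 (Ioi 0), t ∈ Ioc 0 1 := Ioc_mem_nhdsGT one_pos
  refine tendsto_of_tendsto_of_tendsto_of_le_of_le' tendsto_const_nhds
    (tendsto_mgf_sub_one_div hZ hexp) ?_ ?_
  · filter_upwards [hunit] with t ht
    exact integral_le_cgf_div ht.1 hZ (integrable_exp_mul_of_mem_Ioc ht hexp)
  · filter_upwards [hunit] with t ht
    exact div_le_div_of_nonneg_right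
      (Real.log_le_sub_one_of_pos (mgf_pos (integrable_exp_mul_of_mem_Ioc ht hexp))) ht.1.le

lemma abs_cgf_div_le {t : ℝ} (ht : t ∈ Ioc 0 1) (hZ : Integrable Z Q)
    (hexp : Integrable (fun ω => Real.exp (Z ω)) Q) :
    |cgf Z Q t / t| ≤ |∫ ω, Z ω ∂Q| + |cgf Z Q 1| :=
  (abs_le_max_abs_abs (integral_le_cgf_div ht.1 hZ (integrable_exp_mul_of_mem_Ioc ht hexp))
    (cgf_div_le_cgf_one ht hexp)).trans (max_le_add_of_nonneg (abs_nonneg _) (abs_nonneg _))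

end CumulantGeneratingFunction

section ExponentialIntegrals

variable {P : Measure Ω} {a₀ a₁ : ℝ} {X Y : Ω → ℝ}

lemma integrable_exp_neg_mul_mul_of_nonneg {a : ℝ} (ha : 0 ≤ a) (hX : AEMeasurable X P)
    (hX0 : ∀ᵐ ω ∂P, 0 ≤ X ω) (hY : Integrable Y P) :
    Integrable (fun ω => Real.exp (-a * X ω) * Y ω) P := by
  refine hY.bdd_mul (c := 1) (by fun_prop) ?_
  filter_upwards [hX0] with ω hω
  rw [Real.norm_eq_abs, Real.abs_exp, Real.exp_le_one_iff, neg_mul]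
  exact neg_nonpos.2 (mul_nonneg ha hω)

lemma integrable_exp_neg_mul_of_nonneg [IsFiniteMeasure P] {a : ℝ} (ha : 0 ≤ a)
    (hX : AEMeasurable X P) (hX0 : ∀ᵐ ω ∂P, 0 ≤ X ω) :
    Integrable (fun ω => Real.exp (-a * X ω)) P := by
  simpa only [mul_one] using integrable_exp_neg_mul_mul_of_nonneg ha hX hX0 (integrable_const 1)

lemma integrable_exp_neg_mul_add_mul {a t : ℝ} (ht : t ∈ Icc 0 1)
    (hX : AEMeasurable X P) (hY : AEMeasurable Y P)
    (hexpX : Integrable (fun ω => Real.exp (-a * X ω)) P)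
    (hexpXY : Integrable (fun ω => Real.exp (-a * (X ω + Y ω))) P) :
    Integrable (fun ω => Real.exp (-a * (X ω + t * Y ω))) P := by
  refine ((hexpX.const_mul (1 - t)).add (hexpXY.const_mul t)).mono' (by fun_prop)
    (ae_of_all P fun ω => ?_)
  have hconv := convexOn_exp.2 (mem_univ (-a * X ω)) (mem_univ (-a * (X ω + Y ω)))
    (sub_nonneg.2 ht.2) ht.1 (sub_add_cancel 1 t)
  simp only [smul_eq_mul] at hconv
  calc ‖Real.exp (-a * (X ω + t * Y ω))‖
      = Real.exp ((1 - t) * (-a * X ω) + t * (-a * (X ω + Y ω))) := by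
        rw [Real.norm_eq_abs, Real.abs_exp]
        ring_nf
    _ ≤ (1 - t) * Real.exp (-a * X ω) + t * Real.exp (-a * (X ω + Y ω)) := hconv

lemma exp_neg_mul_le_add {a : ℝ} (ha : a ∈ Icc a₀ a₁) (x : ℝ) :
    Real.exp (-a * x) ≤ Real.exp (-a₀ * x) + Real.exp (-a₁ * x) := by
  rcases le_total 0 x with hx | hx
  · have : Real.exp (-a * x) ≤ Real.exp (-a₀ * x) := Real.exp_le_exp.2 (by nlinarith [ha.1])
    linarith [Real.exp_pos (-a₁ * x)]
  · have : Real.exp (-a * x) ≤ Real.exp (-a₁ * x) := Real.exp_le_exp.2 (by nlinarith [ha.2])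
    linarith [Real.exp_pos (-a₀ * x)]

lemma continuousOn_integral_exp_neg_mul_mul
    (hint : ∀ a ∈ Icc a₀ a₁, Integrable (fun ω => Real.exp (-a * X ω) * Y ω) P) :
    ContinuousOn (fun a => ∫ ω, Real.exp (-a * X ω) * Y ω ∂P) (Icc a₀ a₁) := by
  rcases lt_or_ge a₁ a₀ with hlt | hle
  · simp only [Icc_eq_empty hlt.not_ge, continuousOn_empty]
  refine continuousOn_of_dominated (fun a ha => (hint a ha).aestronglyMeasurable)
    (fun a ha => ae_of_all P fun ω => ?_)
    ((hint a₀ (left_mem_Icc.2 hle)).norm.add (hint a₁ (right_mem_Icc.2 hle)).norm)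
    (ae_of_all P fun ω => by fun_prop)
  simp only [norm_mul, Pi.add_apply, Real.norm_eq_abs, Real.abs_exp, ← add_mul]
  gcongr
  exact exp_neg_mul_le_add ha (X ω)

lemma continuousOn_integral_exp_neg_mul
    (hint : ∀ a ∈ Icc a₀ a₁, Integrable (fun ω => Real.exp (-a * X ω)) P) :
    ContinuousOn (fun a => ∫ ω, Real.exp (-a * X ω) ∂P) (Icc a₀ a₁) := by
  simpa only [mul_one] using continuousOn_integral_exp_neg_mul_mul (P := P) (X := X)
    (Y := fun _ => 1) (by simpa only [mul_one] using hint)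

lemma continuousOn_entropic [NeZero P] (ha₀ : 0 < a₀)
    (hint : ∀ a ∈ Icc a₀ a₁, Integrable (fun ω => Real.exp (-a * X ω)) P) :
    ContinuousOn (fun a => entropic P a X) (Icc a₀ a₁) :=
  (continuousOn_const.div continuousOn_id fun _ ha => (ha₀.trans_le ha.1).ne').mul
    ((continuousOn_integral_exp_neg_mul hint).log fun a ha => (integral_exp_pos (hint a ha)).ne')

end ExponentialIntegrals

section Esscher

open ProbabilityTheory

/-- The Esscher measure with density `e^{-aX} / E[e^{-aX}]` with respect to `P`, under which the
entropic risk measure at `X` is differentiated. It is `0` if `e^{-aX}` is not integrable. -/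
abbrev esscher (P : Measure Ω) (a : ℝ) (X : Ω → ℝ) : Measure Ω := P.tilted fun ω => -a * X ω

variable {P : Measure Ω} {a : ℝ} {X Y : Ω → ℝ}

lemma integral_esscher (P : Measure Ω) (a : ℝ) (X Y : Ω → ℝ) :
    ∫ ω, Y ω ∂esscher P a X
      = (∫ ω, Real.exp (-a * X ω) * Y ω ∂P) / ∫ ω, Real.exp (-a * X ω) ∂P := by
  rw [integral_tilted, ← integral_div]
  simp only [smul_eq_mul, div_mul_eq_mul_div]

lemma mgf_esscher (P : Measure Ω) (a t : ℝ) (X Y : Ω → ℝ) :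
    mgf (fun ω => -a * Y ω) (esscher P a X) t
      = (∫ ω, Real.exp (-a * (X ω + t * Y ω)) ∂P) / ∫ ω, Real.exp (-a * X ω) ∂P := by
  rw [mgf, integral_exp_tilted]
  congr! 4 with ω
  simp only [Pi.add_apply]
  ring

lemma integrable_esscher (hexpX : Integrable (fun ω => Real.exp (-a * X ω)) P)
    (hexpY : Integrable (fun ω => Real.exp (-a * X ω) * Y ω) P) :
    Integrable Y (esscher P a X) :=
  (integrable_tilted_iff hexpX Y).2 hexpY

lemma integrable_exp_esscher (hexpX : Integrable (fun ω => Real.exp (-a * X ω)) P)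
    (hexpXY : Integrable (fun ω => Real.exp (-a * (X ω + Y ω))) P) :
    Integrable (fun ω => Real.exp (-a * Y ω)) (esscher P a X) :=
  integrable_esscher hexpX (by simpa only [mul_add, Real.exp_add] using hexpXY)

variable [NeZero P]

lemma entropic_sub_entropic_eq_cgf {t : ℝ}
    (hexpX : Integrable (fun ω => Real.exp (-a * X ω)) P)
    (hexpXY : Integrable (fun ω => Real.exp (-a * (X ω + t * Y ω))) P) :
    entropic P a (fun ω => X ω + t * Y ω) - entropic P a X
      = (1 / a) * cgf (fun ω => -a * Y ω) (esscher P a X) t := by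
  rw [cgf, mgf_esscher, Real.log_div (integral_exp_pos hexpXY).ne' (integral_exp_pos hexpX).ne',
    entropic, entropic, mul_sub]

lemma continuousOn_integral_esscher {a₀ a₁ : ℝ}
    (hexpX : ∀ a ∈ Icc a₀ a₁, Integrable (fun ω => Real.exp (-a * X ω)) P)
    (hexpY : ∀ a ∈ Icc a₀ a₁, Integrable (fun ω => Real.exp (-a * X ω) * Y ω) P) :
    ContinuousOn (fun a => ∫ ω, Y ω ∂esscher P a X) (Icc a₀ a₁) := by
  simp only [integral_esscher]
  exact (continuousOn_integral_exp_neg_mul_mul hexpY).div (continuousOn_integral_exp_neg_mul hexpX)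
    fun a ha => (integral_exp_pos (hexpX a ha)).ne'

lemma tendsto_entropic_slope (ha : a ≠ 0) (hX : AEMeasurable X P) (hY : AEMeasurable Y P)
    (hexpX : Integrable (fun ω => Real.exp (-a * X ω)) P)
    (hexpXY : Integrable (fun ω => Real.exp (-a * (X ω + Y ω))) P)
    (hexpY : Integrable (fun ω => Real.exp (-a * X ω) * Y ω) P) :
    Tendsto (fun t => (entropic P a (fun ω => X ω + t * Y ω) - entropic P a X) / t)
      (nhdsWithin 0 (Ioi 0)) (nhds (-∫ ω, Y ω ∂esscher P a X)) := by
  have := isProbabilityMeasure_tilted hexpX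
  have hcgf := (tendsto_cgf_div ((integrable_esscher hexpX hexpY).const_mul (-a))
    (integrable_exp_esscher hexpX hexpXY)).const_mul (1 / a)
  have hlimit : 1 / a * ∫ ω, -a * Y ω ∂esscher P a X = -∫ ω, Y ω ∂esscher P a X := by
    rw [integral_const_mul]
    field_simp
  rw [hlimit] at hcgf
  refine hcgf.congr' ?_
  filter_upwards [Ioc_mem_nhdsGT one_pos] with t ht
  rw [entropic_sub_entropic_eq_cgf hexpX (integrable_exp_neg_mul_add_mul
    (Ioc_subset_Icc_self ht) hX hY hexpX hexpXY), mul_div_assoc]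

lemma abs_entropic_slope_le {t : ℝ} (ha : a ≠ 0) (ht : t ∈ Ioc 0 1)
    (hX : AEMeasurable X P) (hY : AEMeasurable Y P)
    (hexpX : Integrable (fun ω => Real.exp (-a * X ω)) P)
    (hexpXY : Integrable (fun ω => Real.exp (-a * (X ω + Y ω))) P)
    (hexpY : Integrable (fun ω => Real.exp (-a * X ω) * Y ω) P) :
    |(entropic P a (fun ω => X ω + t * Y ω) - entropic P a X) / t|
      ≤ |∫ ω, Y ω ∂esscher P a X| + |entropic P a (fun ω => X ω + Y ω) - entropic P a X| := by
  have := isProbabilityMeasure_tilted hexpX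
  have hcgf := abs_cgf_div_le ht ((integrable_esscher hexpX hexpY).const_mul (-a))
    (integrable_exp_esscher hexpX hexpXY)
  have hone : entropic P a (fun ω => X ω + Y ω) - entropic P a X
      = 1 / a * cgf (fun ω => -a * Y ω) (esscher P a X) 1 := by
    simpa only [one_mul] using
      entropic_sub_entropic_eq_cgf (t := 1) hexpX (by simpa only [one_mul] using hexpXY)
  rw [entropic_sub_entropic_eq_cgf hexpX (integrable_exp_neg_mul_add_mul
    (Ioc_subset_Icc_self ht) hX hY hexpX hexpXY), hone, mul_div_assoc, abs_mul, abs_mul]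
  refine (mul_le_mul_of_nonneg_left hcgf (abs_nonneg _)).trans_eq ?_
  rw [mul_add, integral_const_mul, abs_mul, abs_neg, ← mul_assoc, ← abs_mul,
    one_div_mul_cancel ha, abs_one, one_mul]

end Esscher

section Werm

variable {P : Measure Ω} [NeZero P] {m : Measure ℝ} [IsLocallyFiniteMeasure m]
  {a₀ a₁ : ℝ} {X Y : Ω → ℝ}

lemma werm_slope_eq_integral {t : ℝ} (ha₀ : 0 < a₀) (ht : t ∈ Icc 0 1)
    (hX : AEMeasurable X P) (hY : AEMeasurable Y P)
    (hexpX : ∀ a ∈ Icc a₀ a₁, Integrable (fun ω => Real.exp (-a * X ω)) P)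
    (hexpXY : ∀ a ∈ Icc a₀ a₁, Integrable (fun ω => Real.exp (-a * (X ω + Y ω))) P) :
    (werm P m a₀ a₁ (fun ω => X ω + t * Y ω) - werm P m a₀ a₁ X) / t
      = ∫ a in Icc a₀ a₁, (entropic P a (fun ω => X ω + t * Y ω) - entropic P a X) / t ∂m := by
  have hXt : IntegrableOn (fun a => entropic P a fun ω => X ω + t * Y ω) (Icc a₀ a₁) m :=
    (continuousOn_entropic ha₀ fun a ha =>
      integrable_exp_neg_mul_add_mul ht hX hY (hexpX a ha) (hexpXY a ha)).integrableOn_Icc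
  rw [integral_div, integral_sub hXt (continuousOn_entropic ha₀ hexpX).integrableOn_Icc, werm,
    werm]

variable [SFinite P]

lemma integrable_prod_esscher_density_mul (hX : AEMeasurable X P) (hY : AEMeasurable Y P)
    (hexpX : ∀ a ∈ Icc a₀ a₁, Integrable (fun ω => Real.exp (-a * X ω)) P)
    (hexpY : ∀ a ∈ Icc a₀ a₁, Integrable (fun ω => Real.exp (-a * X ω) * Y ω) P) :
    Integrable (Function.uncurry fun a ω =>
      Real.exp (-a * X ω) / (∫ ω', Real.exp (-a * X ω') ∂P) * Y ω)
      ((m.restrict (Icc a₀ a₁)).prod P) := by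
  have hmeas : AEStronglyMeasurable (Function.uncurry fun a ω =>
      Real.exp (-a * X ω) / (∫ ω', Real.exp (-a * X ω') ∂P) * Y ω)
      ((m.restrict (Icc a₀ a₁)).prod P) := by
    have hnorm := ((continuousOn_integral_exp_neg_mul hexpX).aestronglyMeasurable (μ := m)
      measurableSet_Icc).aemeasurable.comp_fst (ν := P)
    have hexp : AEMeasurable (fun z : ℝ × Ω => Real.exp (-z.1 * X z.2))
        ((m.restrict (Icc a₀ a₁)).prod P) := by fun_prop
    exact ((hexp.div hnorm).mul hY.comp_snd).aestronglyMeasurable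
  refine (integrable_prod_iff hmeas).2 ⟨?_, ?_⟩
  · filter_upwards [ae_restrict_mem measurableSet_Icc] with a ha
    simpa only [Function.uncurry_apply_pair, div_mul_eq_mul_div] using (hexpY a ha).div_const _
  · have habs : IntegrableOn (fun a => ∫ ω, |Y ω| ∂esscher P a X) (Icc a₀ a₁) m :=
      (continuousOn_integral_esscher hexpX fun a ha => by
        simpa only [abs_mul, Real.abs_exp] using (hexpY a ha).abs).integrableOn_Icc
    refine habs.congr (ae_of_all _ fun a => ?_)
    have hpos : 0 ≤ ∫ ω, Real.exp (-a * X ω) ∂P := integral_nonneg fun ω => (Real.exp_pos _).le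
    simp only [Function.uncurry_apply_pair, integral_tilted, smul_eq_mul, Real.norm_eq_abs, abs_mul,
      abs_div, Real.abs_exp, abs_of_nonneg hpos]

lemma integral_hprime_mul (hX : AEMeasurable X P) (hY : AEMeasurable Y P)
    (hexpX : ∀ a ∈ Icc a₀ a₁, Integrable (fun ω => Real.exp (-a * X ω)) P)
    (hexpY : ∀ a ∈ Icc a₀ a₁, Integrable (fun ω => Real.exp (-a * X ω) * Y ω) P) :
    ∫ ω, hprime P m a₀ a₁ X ω * Y ω ∂P = ∫ a in Icc a₀ a₁, -∫ ω, Y ω ∂esscher P a X ∂m := by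
  calc ∫ ω, hprime P m a₀ a₁ X ω * Y ω ∂P
      = -∫ ω, ∫ a in Icc a₀ a₁,
          Real.exp (-a * X ω) / (∫ ω', Real.exp (-a * X ω') ∂P) * Y ω ∂m ∂P := by
        simp only [hprime, neg_mul, integral_mul_const, integral_neg]
    _ = -∫ a in Icc a₀ a₁, ∫ ω,
          Real.exp (-a * X ω) / (∫ ω', Real.exp (-a * X ω') ∂P) * Y ω ∂P ∂m := by
        rw [← integral_integral_swap (integrable_prod_esscher_density_mul hX hY hexpX hexpY)]
    _ = ∫ a in Icc a₀ a₁, -∫ ω, Y ω ∂esscher P a X ∂m := by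
        simp only [integral_neg, integral_tilted, smul_eq_mul]

theorem werm_gateaux_derivative_general (ha₀ : 0 < a₀)
    (hX : AEMeasurable X P) (hY : AEMeasurable Y P)
    (hexpX : ∀ a ∈ Icc a₀ a₁, Integrable (fun ω => Real.exp (-a * X ω)) P)
    (hexpXY : ∀ a ∈ Icc a₀ a₁, Integrable (fun ω => Real.exp (-a * (X ω + Y ω))) P)
    (hexpY : ∀ a ∈ Icc a₀ a₁, Integrable (fun ω => Real.exp (-a * X ω) * Y ω) P) :
    Tendsto (fun t : ℝ => (werm P m a₀ a₁ (fun ω => X ω + t * Y ω) - werm P m a₀ a₁ X) / t)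
      (nhdsWithin 0 (Ioi 0)) (nhds (∫ ω, hprime P m a₀ a₁ X ω * Y ω ∂P)) := by
  have hunit : ∀ᶠ t : ℝ in nhdsWithin 0 (Ioi 0), t ∈ Ioc 0 1 := Ioc_mem_nhdsGT one_pos
  have hne {a : ℝ} (ha : a ∈ Icc a₀ a₁) : a ≠ 0 := (ha₀.trans_le ha.1).ne'
  have hcontX := continuousOn_entropic ha₀ hexpX
  have hbound : IntegrableOn (fun a => |∫ ω, Y ω ∂esscher P a X|
      + |entropic P a (fun ω => X ω + Y ω) - entropic P a X|) (Icc a₀ a₁) m :=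
    ((continuousOn_integral_esscher hexpX hexpY).abs.add
      ((continuousOn_entropic ha₀ hexpXY).sub hcontX).abs).integrableOn_Icc
  rw [integral_hprime_mul hX hY hexpX hexpY]
  refine Tendsto.congr' (hunit.mono fun t ht => (werm_slope_eq_integral ha₀
    (Ioc_subset_Icc_self ht) hX hY hexpX hexpXY).symm) ?_
  refine tendsto_integral_filter_of_dominated_convergence _ ?_ ?_ hbound ?_
  · filter_upwards [hunit] with t ht
    exact (((continuousOn_entropic ha₀ fun a ha => integrable_exp_neg_mul_add_mul
      (Ioc_subset_Icc_self ht) hX hY (hexpX a ha) (hexpXY a ha)).sub hcontX).div_const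
        t).aestronglyMeasurable measurableSet_Icc
  · filter_upwards [hunit] with t ht
    filter_upwards [ae_restrict_mem measurableSet_Icc] with a ha
    exact abs_entropic_slope_le (hne ha) ht hX hY (hexpX a ha) (hexpXY a ha) (hexpY a ha)
  · filter_upwards [ae_restrict_mem measurableSet_Icc] with a ha
    exact tendsto_entropic_slope (hne ha) hX hY (hexpX a ha) (hexpXY a ha) (hexpY a ha)

end Werm

/-- the right directional (Gâteaux) derivative of the WERM `h` at `X ≥ 0` in an
integrable direction `Y` with `X + Y ≥ 0` equals `E[h′(X)·Y]`. -/
theorem werm_gateaux_derivative (P : Measure Ω) [IsProbabilityMeasure P]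
    (a₀ a₁ : ℝ) (ha₀ : 0 < a₀) (ha₀₁ : a₀ < a₁)
    (m : Measure ℝ) [IsProbabilityMeasure m] (hm : m (Set.Icc a₀ a₁) = 1)
    (X Y : Ω → ℝ) (hmX : Measurable X) (hX0 : ∀ᵐ ω ∂P, 0 ≤ X ω)
    (hmY : Measurable Y) (hYint : Integrable Y P)
    (hXY0 : ∀ᵐ ω ∂P, 0 ≤ X ω + Y ω) :
    Tendsto
      (fun t : ℝ =>
        (werm P m a₀ a₁ (fun ω => X ω + t * Y ω) - werm P m a₀ a₁ X) / t)
      (nhdsWithin 0 (Set.Ioi 0))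
      (nhds (∫ ω, hprime P m a₀ a₁ X ω * Y ω ∂P)) := by
  have hnonneg : ∀ a ∈ Icc a₀ a₁, 0 ≤ a := fun a ha => ha₀.le.trans ha.1
  exact werm_gateaux_derivative_general ha₀ hmX.aemeasurable hmY.aemeasurable
    (fun a ha => integrable_exp_neg_mul_of_nonneg (hnonneg a ha) hmX.aemeasurable hX0)
    (fun a ha => integrable_exp_neg_mul_of_nonneg (hnonneg a ha) (hmX.add hmY).aemeasurable hXY0)
    (fun a ha => integrable_exp_neg_mul_mul_of_nonneg (hnonneg a ha) hmX.aemeasurable hX0 hYint)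
end
end

section
/- Let λ > 0 be such that the infimum of h(X) + λ·E[ρX] over X ∈ L⁰₊ is finite. Then X* ∈ L⁰₊ minimizes h(X) + λ·E[ρX] over X ∈ L⁰₊ if and only if h′(X*) + λρ ≥ 0 a.s. and h′(X*) + λρ = 0 a.s. on the event {X* > 0}. -/
/-!
The functional `h` is convex with derivative `h′`, so the claim is the Karush-Kuhn-Tucker
condition over the cone `L⁰₊`.

Convexity enters as the tangent inequality `h(X) + E[h′(X)(Y - X)] ≤ h(Y)`, which is Jensen's
inequality under each Esscher measure `e^{-aX}/E[e^{-aX}] dP`, integrated over `a`. Sufficiency is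
the tangent inequality at `X*`, combined with `h′(X*)Y ≥ -λρY` and `h′(X*)X* = -λρX*`; here
`E[ρX*] < ∞` because `x e^{-ax}` is bounded on `x ≥ 0`.

For necessity, the tangent inequality at `X* + t(Y - X*)`, in the limit `t → 0`, gives
`E[(h′(X*) + λρ)(Y - X*)] ≥ 0` whenever `Y - X*` is bounded. Take `Y = X* + 1` where
`h′(X*) + λρ < 0` and `Y = max(X* - 1, 0)` elsewhere: the integrand is then nonpositive, hence zero
almost surely, which is the first-order condition.
-/

open MeasureTheory Filter Set
open scoped ENNReal

noncomputable section

variable {Ω : Type*} [MeasurableSpace Ω]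

section Tilted

variable {α : Type*} [MeasurableSpace α] {μ : Measure α} {f g : α → ℝ}

lemma log_integral_exp_add_integral_tilted_le [NeZero μ]
    (hf : Integrable (fun x => Real.exp (f x)) μ) (hg : Integrable (fun x => Real.exp (g x)) μ)
    (hfg : Integrable (fun x => g x - f x) (μ.tilted f)) :
    Real.log (∫ x, Real.exp (f x) ∂μ) + ∫ x, (g x - f x) ∂μ.tilted f
      ≤ Real.log (∫ x, Real.exp (g x) ∂μ) := by
  have := isProbabilityMeasure_tilted hf
  have hexp : Integrable (fun x => Real.exp (g x - f x)) (μ.tilted f) := by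
    simpa [integrable_tilted_iff hf, ← Real.exp_add] using hg
  have jensen : Real.exp (∫ x, (g x - f x) ∂μ.tilted f)
      ≤ (∫ x, Real.exp (g x) ∂μ) / ∫ x, Real.exp (f x) ∂μ := by
    simpa [integral_exp_tilted] using convexOn_exp.map_integral_le Real.continuous_exp.continuousOn
      isClosed_univ (by simp) hfg hexp
  have hlog := Real.log_le_log (Real.exp_pos _) jensen
  rw [Real.log_exp, Real.log_div (integral_exp_pos hg).ne' (integral_exp_pos hf).ne'] at hlog
  linarith

end Tilted

section ExponentialMoments

open ProbabilityTheory

variable {P : Measure Ω} {X Y : Ω → ℝ} {a c : ℝ}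

lemma measurable_mgf [SFinite P] (hX : Measurable X) : Measurable (mgf X P) := by
  have h : Measurable fun p : ℝ × Ω => Real.exp (p.1 * X p.2) := by fun_prop
  exact (h.stronglyMeasurable.integral_prod_right' (ν := P)).measurable

/-- The density `e^{-aX} / E[e^{-aX}]` with respect to `P` of the Esscher measure with parameter
`a`, that is, of `P.tilted (-a * X)`. -/
def esscherDensity (P : Measure Ω) (X : Ω → ℝ) (a : ℝ) (ω : Ω) : ℝ :=
  Real.exp (-a * X ω) / mgf X P (-a)

lemma esscherDensity_nonneg (a : ℝ) (ω : Ω) : 0 ≤ esscherDensity P X a ω :=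
  div_nonneg (Real.exp_nonneg _) mgf_nonneg

lemma measurable_uncurry_esscherDensity [SFinite P] (hX : Measurable X) :
    Measurable fun p : Ω × ℝ => esscherDensity P X p.2 p.1 := by
  have h := measurable_mgf (P := P) hX
  unfold esscherDensity
  fun_prop

lemma integral_tilted_eq_integral_esscherDensity_mul (a : ℝ) (g : Ω → ℝ) :
    ∫ ω, g ω ∂P.tilted (fun ω => -a * X ω) = ∫ ω, esscherDensity P X a ω * g ω ∂P :=
  integral_tilted _ _

lemma mgf_le_exp_mul_mgf (ha : 0 ≤ a) (hY : Integrable (fun ω => Real.exp (-a * Y ω)) P)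
    (hYX : ∀ᵐ ω ∂P, Y ω ≤ X ω + c) : mgf X P (-a) ≤ Real.exp (a * c) * mgf Y P (-a) := by
  have h := mgf_anti_of_nonpos hYX (neg_nonpos.2 ha) hY
  rw [mgf_add_const, neg_mul, Real.exp_neg, ← div_eq_mul_inv, div_le_iff₀ (Real.exp_pos _)] at h
  linarith

lemma esscherDensity_le_exp_mul [NeZero P] (ha : 0 ≤ a)
    (hX : Integrable (fun ω => Real.exp (-a * X ω)) P)
    (hY : Integrable (fun ω => Real.exp (-a * Y ω)) P)
    (hXY : ∀ᵐ ω ∂P, |Y ω - X ω| ≤ c) {ω : Ω} (hω : |Y ω - X ω| ≤ c) :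
    esscherDensity P Y a ω ≤ Real.exp (2 * a * c) * esscherDensity P X a ω := by
  have hnum : Real.exp (-a * Y ω) ≤ Real.exp (a * c) * Real.exp (-a * X ω) := by
    rw [← Real.exp_add, Real.exp_le_exp]
    linarith [mul_le_mul_of_nonneg_left (abs_le.1 hω).1 ha]
  have hden : mgf X P (-a) ≤ Real.exp (a * c) * mgf Y P (-a) := by
    refine mgf_le_exp_mul_mgf ha hY ?_
    filter_upwards [hXY] with ω hω
    linarith [(abs_le.1 hω).2]
  have hGX : 0 < mgf X P (-a) := mgf_pos_iff.2 hX
  have hGY : 0 < mgf Y P (-a) := mgf_pos_iff.2 hY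
  rw [esscherDensity, esscherDensity, ← mul_div_assoc, div_le_div_iff₀ hGY hGX]
  calc Real.exp (-a * Y ω) * mgf X P (-a)
      ≤ (Real.exp (a * c) * Real.exp (-a * X ω)) * (Real.exp (a * c) * mgf Y P (-a)) := by gcongr
    _ = Real.exp (2 * a * c) * Real.exp (-a * X ω) * mgf Y P (-a) := by
      rw [show 2 * a * c = a * c + a * c by ring, Real.exp_add]
      ring

lemma entropic_sub_integral_esscherDensity_mul_sub_le [NeZero P] (ha : 0 < a)
    (hX : Integrable (fun ω => Real.exp (-a * X ω)) P)
    (hY : Integrable (fun ω => Real.exp (-a * Y ω)) P)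
    (hXY : Integrable (fun ω => esscherDensity P X a ω * (Y ω - X ω)) P) :
    entropic P a X - ∫ ω, esscherDensity P X a ω * (Y ω - X ω) ∂P ≤ entropic P a Y := by
  have hlin : ∀ ω, -a * Y ω - -a * X ω = -a * (Y ω - X ω) := fun ω => by ring
  have hint : Integrable (fun ω => -a * Y ω - -a * X ω) (P.tilted fun ω => -a * X ω) := by
    rw [integrable_tilted_iff hX]
    refine (hXY.const_mul (-a * mgf X P (-a))).congr (.of_forall fun ω => ?_)
    have := (mgf_pos_iff.2 hX).ne'
    simp only [esscherDensity, smul_eq_mul, hlin]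
    field_simp
  have h := log_integral_exp_add_integral_tilted_le hX hY hint
  simp_rw [hlin] at h
  rw [integral_const_mul, integral_tilted_eq_integral_esscherDensity_mul] at h
  simp only [entropic, one_div_mul_eq_div]
  rw [sub_le_iff_le_add, div_add' _ _ _ ha.ne', div_le_div_iff_of_pos_right ha]
  linarith

end ExponentialMoments

section NonnegativePayoffs

open ProbabilityTheory

variable {P : Measure Ω} {X Y : Ω → ℝ} {a b c : ℝ}

lemma Lpos.add_mul_sub (hX : Lpos P X) (hY : Lpos P Y) {t : ℝ} (ht : t ∈ Icc 0 1) :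
    Lpos P fun ω => X ω + t * (Y ω - X ω) := by
  refine ⟨hX.1.add ((hY.1.sub hX.1).const_mul t), ?_⟩
  filter_upwards [hX.2, hY.2] with ω hXω hYω
  nlinarith [mul_nonneg (sub_nonneg.2 ht.2) hXω, mul_nonneg ht.1 hYω]

lemma Lpos.integrable_exp_neg_mul [IsFiniteMeasure P] (hX : Lpos P X) (ha : 0 ≤ a) :
    Integrable (fun ω => Real.exp (-a * X ω)) P := by
  simpa using integrable_exp_mul_of_le a 0 ha hX.1.neg.aemeasurable
    (hX.2.mono fun _ h => neg_nonpos.2 h)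

lemma Lpos.mgf_neg_pos [IsFiniteMeasure P] [NeZero P] (hX : Lpos P X) (ha : 0 ≤ a) :
    0 < mgf X P (-a) :=
  mgf_pos_iff.2 (hX.integrable_exp_neg_mul ha)

lemma Lpos.mgf_neg_anti [IsFiniteMeasure P] (hX : Lpos P X) (ha : 0 ≤ a) (hab : a ≤ b) :
    mgf X P (-b) ≤ mgf X P (-a) := by
  refine integral_mono_ae (hX.integrable_exp_neg_mul (ha.trans hab))
    (hX.integrable_exp_neg_mul ha) ?_
  filter_upwards [hX.2] with ω hω
  gcongr

lemma Lpos.continuousOn_mgf_neg [IsFiniteMeasure P] (hX : Lpos P X) :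
    ContinuousOn (fun a => mgf X P (-a)) (Ioi 0) := by
  have hsub : Iio 0 ⊆ interior (integrableExpSet X P) :=
    interior_maximal (fun t ht => by
      simpa [integrableExpSet] using hX.integrable_exp_neg_mul (neg_nonneg.2 (le_of_lt ht)))
      isOpen_Iio
  exact continuousOn_mgf.comp continuousOn_neg fun a ha => hsub (mem_Iio.2 (neg_lt_zero.2 ha))

lemma Lpos.continuousOn_entropic [IsFiniteMeasure P] [NeZero P] (hX : Lpos P X) :
    ContinuousOn (fun a => entropic P a X) (Ioi 0) :=
  (continuousOn_const.div continuousOn_id fun _ ha => ne_of_gt ha).mul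
    (hX.continuousOn_mgf_neg.log fun _ ha => (hX.mgf_neg_pos (le_of_lt ha)).ne')

lemma Lpos.continuousOn_esscherDensity [IsFiniteMeasure P] [NeZero P] (hX : Lpos P X) (ω : Ω) :
    ContinuousOn (fun a => esscherDensity P X a ω) (Ioi 0) :=
  (by fun_prop : Continuous fun a : ℝ => Real.exp (-a * X ω)).continuousOn.div
    hX.continuousOn_mgf_neg fun _ ha => (hX.mgf_neg_pos (le_of_lt ha)).ne'

lemma Lpos.esscherDensity_le [IsFiniteMeasure P] [NeZero P] (hX : Lpos P X) (hb : 0 ≤ b)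
    (ha : a ∈ Icc b c) {ω : Ω} (hω : 0 ≤ X ω) :
    esscherDensity P X a ω ≤ Real.exp (-b * X ω) / mgf X P (-c) := by
  have ha0 : 0 ≤ a := hb.trans ha.1
  refine div_le_div₀ (Real.exp_nonneg _) ?_ (hX.mgf_neg_pos (ha0.trans ha.2))
    (hX.mgf_neg_anti ha0 ha.2)
  have := ha.1
  gcongr

end NonnegativePayoffs

section MarginalRisk

open ProbabilityTheory
open scoped Topology

variable {P : Measure Ω} {m : Measure ℝ} {a₀ a₁ c : ℝ} {X Y D : Ω → ℝ}

lemma neg_hprime_eq_integral_esscherDensity (ω : Ω) :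
    -hprime P m a₀ a₁ X ω = ∫ a in Icc a₀ a₁, esscherDensity P X a ω ∂m :=
  neg_neg _

lemma hprime_nonpos (ω : Ω) : hprime P m a₀ a₁ X ω ≤ 0 := by
  rw [← neg_nonneg, neg_hprime_eq_integral_esscherDensity]
  exact integral_nonneg fun a => esscherDensity_nonneg a ω

lemma measurable_hprime [SFinite P] [SFinite m] (hX : Measurable X) :
    Measurable (hprime P m a₀ a₁ X) :=
  ((measurable_uncurry_esscherDensity hX).stronglyMeasurable.integral_prod_right'
    (ν := m.restrict (Icc a₀ a₁))).measurable.neg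

variable [IsFiniteMeasure P] [NeZero P] [IsFiniteMeasure m]

lemma Lpos.integrableOn_entropic (hX : Lpos P X) (ha₀ : 0 < a₀) :
    IntegrableOn (fun a => entropic P a X) (Icc a₀ a₁) m :=
  (hX.continuousOn_entropic.mono fun _ ha => ha₀.trans_le ha.1).integrableOn_compact isCompact_Icc

lemma Lpos.integrableOn_esscherDensity (hX : Lpos P X) (ha₀ : 0 < a₀) (ω : Ω) :
    IntegrableOn (fun a => esscherDensity P X a ω) (Icc a₀ a₁) m :=
  ((hX.continuousOn_esscherDensity ω).mono fun _ ha => ha₀.trans_le ha.1).integrableOn_compact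
    isCompact_Icc

lemma Lpos.integrable_prod_esscherDensity_mul (hX : Lpos P X) (ha₀ : 0 < a₀) (hD : Measurable D)
    (hint : Integrable (fun ω => hprime P m a₀ a₁ X ω * D ω) P) :
    Integrable (fun p : Ω × ℝ => esscherDensity P X p.2 p.1 * D p.1)
      (P.prod (m.restrict (Icc a₀ a₁))) := by
  have hmeas := measurable_uncurry_esscherDensity (P := P) hX.1
  rw [integrable_prod_iff (by fun_prop)]
  refine ⟨.of_forall fun ω => (hX.integrableOn_esscherDensity ha₀ ω).mul_const (D ω),
    hint.norm.congr (.of_forall fun ω => ?_)⟩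
  simp only [norm_mul, Real.norm_of_nonneg (esscherDensity_nonneg _ _)]
  rw [integral_mul_const, ← neg_hprime_eq_integral_esscherDensity,
    Real.norm_of_nonpos (hprime_nonpos ω)]

lemma werm_add_integral_hprime_mul_sub_le (ha₀ : 0 < a₀) (hX : Lpos P X) (hY : Lpos P Y)
    (hint : Integrable (fun ω => hprime P m a₀ a₁ X ω * (Y ω - X ω)) P) :
    werm P m a₀ a₁ X + ∫ ω, hprime P m a₀ a₁ X ω * (Y ω - X ω) ∂P ≤ werm P m a₀ a₁ Y := by
  have hprod := hX.integrable_prod_esscherDensity_mul (D := fun ω => Y ω - X ω) ha₀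
    (hY.1.sub hX.1) hint
  have fubini : ∫ ω, hprime P m a₀ a₁ X ω * (Y ω - X ω) ∂P
      = -∫ a in Icc a₀ a₁, ∫ ω, esscherDensity P X a ω * (Y ω - X ω) ∂P ∂m := by
    rw [← integral_integral_swap hprod, ← integral_neg]
    simp_rw [integral_mul_const, ← neg_hprime_eq_integral_esscherDensity, neg_mul, neg_neg]
  have hXent := hX.integrableOn_entropic (m := m) (a₁ := a₁) ha₀
  rw [fubini, ← sub_eq_add_neg, werm, werm, ← integral_sub hXent hprod.integral_prod_right]
  refine integral_mono_ae (hXent.sub hprod.integral_prod_right) (hY.integrableOn_entropic ha₀) ?_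
  filter_upwards [ae_restrict_mem measurableSet_Icc, hprod.prod_left_ae] with a ha hinta
  have ha0 : 0 < a := ha₀.trans_le ha.1
  exact entropic_sub_integral_esscherDensity_mul_sub_le ha0 (hX.integrable_exp_neg_mul ha0.le)
    (hY.integrable_exp_neg_mul ha0.le) hinta

lemma Lpos.abs_hprime_le (hX : Lpos P X) (ha₀ : 0 < a₀) {ω : Ω} (hω : 0 ≤ X ω) :
    |hprime P m a₀ a₁ X ω|
      ≤ m.real (Icc a₀ a₁) / mgf X P (-a₁) * Real.exp (-a₀ * X ω) := by
  rw [abs_of_nonpos (hprime_nonpos ω), neg_hprime_eq_integral_esscherDensity]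
  calc ∫ a in Icc a₀ a₁, esscherDensity P X a ω ∂m
      ≤ ∫ _ in Icc a₀ a₁, Real.exp (-a₀ * X ω) / mgf X P (-a₁) ∂m :=
        setIntegral_mono_on (hX.integrableOn_esscherDensity ha₀ ω) (integrable_const _)
          measurableSet_Icc fun a ha => hX.esscherDensity_le ha₀.le ha hω
    _ = m.real (Icc a₀ a₁) / mgf X P (-a₁) * Real.exp (-a₀ * X ω) := by
        rw [setIntegral_const, smul_eq_mul]
        ring

lemma Lpos.integrable_hprime (hX : Lpos P X) (ha₀ : 0 < a₀) :
    Integrable (hprime P m a₀ a₁ X) P := by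
  refine .of_bound (measurable_hprime hX.1).aestronglyMeasurable
    (m.real (Icc a₀ a₁) / mgf X P (-a₁)) ?_
  filter_upwards [hX.2] with ω hω
  have hexp : Real.exp (-a₀ * X ω) ≤ 1 := Real.exp_le_one_iff.2 (by nlinarith)
  exact (hX.abs_hprime_le ha₀ hω).trans (mul_le_of_le_one_right
    (div_nonneg measureReal_nonneg mgf_nonneg) hexp)

lemma Lpos.integrable_hprime_mul_self (hX : Lpos P X) (ha₀ : 0 < a₀) :
    Integrable (fun ω => hprime P m a₀ a₁ X ω * X ω) P := by
  refine .of_bound ((measurable_hprime hX.1).mul hX.1).aestronglyMeasurable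
    (m.real (Icc a₀ a₁) / mgf X P (-a₁) * (Real.exp (-1) / a₀)) ?_
  filter_upwards [hX.2] with ω hω
  have hexp : Real.exp (-a₀ * X ω) * X ω ≤ Real.exp (-1) / a₀ := by
    rw [le_div_iff₀ ha₀, neg_mul]
    linarith [Real.mul_exp_neg_le_exp_neg_one (a₀ * X ω)]
  rw [norm_mul, Real.norm_of_nonneg hω]
  calc |hprime P m a₀ a₁ X ω| * X ω
      ≤ m.real (Icc a₀ a₁) / mgf X P (-a₁) * Real.exp (-a₀ * X ω) * X ω := by
        gcongr
        exact hX.abs_hprime_le ha₀ hω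
    _ ≤ _ := by
        rw [mul_assoc]
        exact mul_le_mul_of_nonneg_left hexp
          (div_nonneg measureReal_nonneg mgf_nonneg)

lemma neg_hprime_le_exp_mul (ha₀ : 0 < a₀) (hX : Lpos P X) (hY : Lpos P Y)
    (hXY : ∀ᵐ ω ∂P, |Y ω - X ω| ≤ c) {ω : Ω} (hω : |Y ω - X ω| ≤ c) :
    -hprime P m a₀ a₁ Y ω ≤ Real.exp (2 * a₁ * c) * -hprime P m a₀ a₁ X ω := by
  have hc : 0 ≤ c := (abs_nonneg _).trans hω
  rw [neg_hprime_eq_integral_esscherDensity, neg_hprime_eq_integral_esscherDensity,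
    ← integral_const_mul]
  refine setIntegral_mono_on (hY.integrableOn_esscherDensity ha₀ ω)
    ((hX.integrableOn_esscherDensity ha₀ ω).const_mul _) measurableSet_Icc fun a ha => ?_
  have ha0 : 0 ≤ a := ha₀.le.trans ha.1
  have := ha.2
  calc esscherDensity P Y a ω ≤ Real.exp (2 * a * c) * esscherDensity P X a ω :=
        esscherDensity_le_exp_mul ha0 (hX.integrable_exp_neg_mul ha0)
          (hY.integrable_exp_neg_mul ha0) hXY hω
    _ ≤ Real.exp (2 * a₁ * c) * esscherDensity P X a ω := by
        have := esscherDensity_nonneg (P := P) (X := X) a ω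
        gcongr

lemma abs_sub_le_sub_one_mul {x y r : ℝ} (hy : 0 ≤ y) (hxy : x ≤ r * y)
    (hyx : y ≤ r * x) : |y - x| ≤ (r - 1) * x := by
  rw [abs_le]
  refine ⟨?_, by linarith⟩
  rcases le_or_gt x y with h | h
  · linarith
  · have hr : 1 ≤ r := by
      by_contra! hr
      linarith [mul_le_mul_of_nonneg_right hr.le hy]
    linarith [mul_le_mul_of_nonneg_left h.le (sub_nonneg.2 hr)]

lemma abs_hprime_sub_hprime_le (ha₀ : 0 < a₀) (hX : Lpos P X) (hY : Lpos P Y)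
    (hXY : ∀ᵐ ω ∂P, |Y ω - X ω| ≤ c) :
    ∀ᵐ ω ∂P, |hprime P m a₀ a₁ Y ω - hprime P m a₀ a₁ X ω|
      ≤ (Real.exp (2 * a₁ * c) - 1) * |hprime P m a₀ a₁ X ω| := by
  filter_upwards [hXY] with ω hω
  have hYX : ∀ᵐ ω ∂P, |X ω - Y ω| ≤ c := hXY.mono fun ω h => by rwa [abs_sub_comm]
  have hle := neg_hprime_le_exp_mul (m := m) (a₁ := a₁) ha₀ hX hY hXY hω
  have hge := neg_hprime_le_exp_mul (m := m) (a₁ := a₁) ha₀ hY hX hYX (by rwa [abs_sub_comm])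
  have h := abs_sub_le_sub_one_mul (neg_nonneg.2 (hprime_nonpos ω)) hge hle
  rwa [neg_sub_neg, abs_sub_comm, ← abs_of_nonpos (hprime_nonpos ω)] at h

lemma tendsto_integral_hprime_lineMap_mul (ha₀ : 0 < a₀) (hX : Lpos P X) (hY : Lpos P Y)
    (hXY : ∀ᵐ ω ∂P, |Y ω - X ω| ≤ c) :
    Tendsto (fun t => ∫ ω, hprime P m a₀ a₁ (fun ω => X ω + t * (Y ω - X ω)) ω * (Y ω - X ω) ∂P)
      (𝓝[>] 0) (𝓝 (∫ ω, hprime P m a₀ a₁ X ω * (Y ω - X ω) ∂P)) := by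
  have hint {Z : Ω → ℝ} (hZ : Lpos P Z) :
      Integrable (fun ω => hprime P m a₀ a₁ Z ω * (Y ω - X ω)) P :=
    (hZ.integrable_hprime ha₀).mul_bdd (hY.1.sub hX.1).aestronglyMeasurable hXY
  have modulus : Tendsto
      (fun t => (Real.exp (2 * a₁ * (t * c)) - 1) * ∫ ω, |hprime P m a₀ a₁ X ω * (Y ω - X ω)| ∂P)
      (𝓝[>] 0) (𝓝 0) := by
    refine (Continuous.tendsto' ?_ 0 0 (by simp)).mono_left nhdsWithin_le_nhds
    fun_prop
  refine tendsto_iff_norm_sub_tendsto_zero.2 <| squeeze_zero' (.of_forall fun _ => norm_nonneg _)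
    ?_ modulus
  filter_upwards [Ioc_mem_nhdsGT one_pos] with t ht
  have hZ : Lpos P fun ω => X ω + t * (Y ω - X ω) := hX.add_mul_sub hY ⟨ht.1.le, ht.2⟩
  have hXZ : ∀ᵐ ω ∂P, |X ω + t * (Y ω - X ω) - X ω| ≤ t * c := by
    filter_upwards [hXY] with ω hω
    rw [add_sub_cancel_left, abs_mul, abs_of_pos ht.1]
    exact mul_le_mul_of_nonneg_left hω ht.1.le
  rw [← integral_sub (hint hZ) (hint hX), ← integral_const_mul]
  refine norm_integral_le_of_norm_le ((hint hX).abs.const_mul _) ?_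
  filter_upwards [abs_hprime_sub_hprime_le (m := m) (a₁ := a₁) ha₀ hX hZ hXZ] with ω hω
  rw [← sub_mul, norm_mul, abs_mul, ← mul_assoc]
  exact mul_le_mul_of_nonneg_right hω (abs_nonneg _)

end MarginalRisk

section DescentPayoff

/-- The competitor that shows necessity of the first-order condition, at a state where the payoff
is `x` and the derivative `h′(X) + λρ` of the objective is `g`: raise the payoff by one where the
derivative is negative, and lower it by one, as far as the constraint allows, elsewhere. -/
def descentPayoff (g x : ℝ) : ℝ :=
  if g < 0 then x + 1 else max (x - 1) 0

variable {P : Measure Ω} {X G : Ω → ℝ} {g x : ℝ}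

lemma descentPayoff_nonneg (hx : 0 ≤ x) : 0 ≤ descentPayoff g x := by
  unfold descentPayoff
  split_ifs <;> positivity

lemma abs_descentPayoff_sub_le_one (hx : 0 ≤ x) : |descentPayoff g x - x| ≤ 1 := by
  unfold descentPayoff
  rw [abs_le]
  split_ifs <;> constructor <;> grind

lemma mul_descentPayoff_sub_nonpos (hx : 0 ≤ x) : g * (descentPayoff g x - x) ≤ 0 := by
  unfold descentPayoff
  split_ifs with hg
  · linarith
  · exact mul_nonpos_of_nonneg_of_nonpos (not_lt.1 hg) (sub_nonpos.2 (max_le (by linarith) hx))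

lemma foc_of_mul_descentPayoff_sub_eq_zero (h : g * (descentPayoff g x - x) = 0) :
    0 ≤ g ∧ (0 < x → g = 0) := by
  unfold descentPayoff at h
  split_ifs at h with hg
  · grind
  · refine ⟨not_lt.1 hg, fun hx => (mul_eq_zero.1 h).resolve_right ?_⟩
    exact (sub_neg.2 (max_lt (by linarith) hx)).ne

lemma Lpos.descentPayoff (hX : Lpos P X) (hG : Measurable G) :
    Lpos P fun ω => descentPayoff (G ω) (X ω) := by
  refine ⟨?_, hX.2.mono fun ω hω => descentPayoff_nonneg hω⟩
  exact Measurable.ite (measurableSet_lt hG measurable_const) (hX.1.add_const 1)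
    ((hX.1.sub_const 1).max measurable_const)

end DescentPayoff

section FirstOrderCondition

variable {P : Measure Ω} {m : Measure ℝ} {a₀ a₁ lam c : ℝ} {ρ X Y : Ω → ℝ}

lemma Lpos.mul_nonneg_ae (hX : Lpos P X) (hρ : ∀ᵐ ω ∂P, 0 ≤ ρ ω) :
    0 ≤ᵐ[P] fun ω => ρ ω * X ω := by
  filter_upwards [hρ, hX.2] with ω h1 h2
  exact mul_nonneg h1 h2

lemma robj_eq_coe (hρ : ∀ᵐ ω ∂P, 0 ≤ ρ ω) (hX : Lpos P X)
    (hρX : Integrable (fun ω => ρ ω * X ω) P) :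
    robj P m a₀ a₁ ρ lam X = ((werm P m a₀ a₁ X + lam * ∫ ω, ρ ω * X ω ∂P : ℝ) : EReal) := by
  have hnn := hX.mul_nonneg_ae hρ
  rw [robj, budget, ← ofReal_integral_eq_lintegral_ofReal hρX hnn, EReal.coe_ennreal_ofReal,
    max_eq_left (integral_nonneg_of_ae hnn)]
  norm_cast

lemma integrable_mul_of_robj_ne_top (hlam : 0 < lam) (hmρ : Measurable ρ)
    (hρ : ∀ᵐ ω ∂P, 0 ≤ ρ ω) (hX : Lpos P X) (hne : robj P m a₀ a₁ ρ lam X ≠ ⊤) :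
    Integrable (fun ω => ρ ω * X ω) P := by
  refine ⟨(hmρ.mul hX.1).aestronglyMeasurable, ?_⟩
  rw [hasFiniteIntegral_iff_ofReal (hX.mul_nonneg_ae hρ), lt_top_iff_ne_top]
  intro htop
  refine hne ?_
  rw [robj, budget, htop, EReal.coe_ennreal_top, EReal.coe_mul_top_of_pos hlam, EReal.coe_add_top]

lemma integrable_mul_of_isMinOn_robj (hlam : 0 < lam) (hmρ : Measurable ρ)
    (hρ : ∀ᵐ ω ∂P, 0 ≤ ρ ω) (hX : Lpos P X)
    (hmin : IsMinOn (robj P m a₀ a₁ ρ lam) {Y | Lpos P Y} X) :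
    Integrable (fun ω => ρ ω * X ω) P := by
  have hzero : Lpos P fun _ => 0 := ⟨measurable_const, .of_forall fun _ => le_rfl⟩
  refine integrable_mul_of_robj_ne_top hlam hmρ hρ hX
    (ne_top_of_le_ne_top ?_ (isMinOn_iff.1 hmin _ hzero))
  rw [robj_eq_coe hρ hzero (by simp)]
  exact EReal.coe_ne_top _

lemma hprime_mul_self_eq_of_foc (hX : Lpos P X)
    (heq : ∀ᵐ ω ∂P, 0 < X ω → hprime P m a₀ a₁ X ω + lam * ρ ω = 0) :
    ∀ᵐ ω ∂P, hprime P m a₀ a₁ X ω * X ω = -lam * (ρ ω * X ω) := by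
  filter_upwards [heq, hX.2] with ω h hω
  rcases hω.eq_or_lt with h0 | h0
  · simp [← h0]
  · linear_combination X ω * h h0

variable [IsFiniteMeasure P] [NeZero P] [IsFiniteMeasure m]

lemma neg_mul_integral_le_integral_hprime_lineMap (ha₀ : 0 < a₀) (hρ : ∀ᵐ ω ∂P, 0 ≤ ρ ω)
    (hX : Lpos P X) (hY : Lpos P Y) (hρX : Integrable (fun ω => ρ ω * X ω) P)
    (hρY : Integrable (fun ω => ρ ω * Y ω) P) (hXY : ∀ᵐ ω ∂P, |Y ω - X ω| ≤ c)
    (hmin : IsMinOn (robj P m a₀ a₁ ρ lam) {Y | Lpos P Y} X) {t : ℝ} (ht : t ∈ Ioc 0 1) :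
    -(lam * ∫ ω, ρ ω * (Y ω - X ω) ∂P)
      ≤ ∫ ω, hprime P m a₀ a₁ (fun ω => X ω + t * (Y ω - X ω)) ω * (Y ω - X ω) ∂P := by
  set Z := fun ω => X ω + t * (Y ω - X ω)
  have hZ : Lpos P Z := hX.add_mul_sub hY ⟨ht.1.le, ht.2⟩
  have hρD : Integrable (fun ω => ρ ω * (Y ω - X ω)) P := by
    simp only [mul_sub]
    exact hρY.sub hρX
  have hρZ_eq : ∀ ω, ρ ω * Z ω = ρ ω * X ω + t * (ρ ω * (Y ω - X ω)) := fun ω => by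
    simp only [Z]
    ring
  have hρZ : Integrable (fun ω => ρ ω * Z ω) P := by
    simp only [hρZ_eq]
    exact hρX.add (hρD.const_mul t)
  have hXZ_eq : ∀ ω, hprime P m a₀ a₁ Z ω * (X ω - Z ω)
      = -t * (hprime P m a₀ a₁ Z ω * (Y ω - X ω)) := fun ω => by
    simp only [Z]
    ring
  have hhD : Integrable (fun ω => hprime P m a₀ a₁ Z ω * (Y ω - X ω)) P :=
    (hZ.integrable_hprime ha₀).mul_bdd (hY.1.sub hX.1).aestronglyMeasurable hXY
  have tangent := werm_add_integral_hprime_mul_sub_le (m := m) (a₁ := a₁) ha₀ hZ hX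
    (by simpa only [hXZ_eq] using hhD.const_mul (-t))
  have optimal := isMinOn_iff.1 hmin Z hZ
  rw [robj_eq_coe hρ hX hρX, robj_eq_coe hρ hZ hρZ, EReal.coe_le_coe_iff] at optimal
  simp only [hρZ_eq] at optimal
  rw [integral_add hρX (hρD.const_mul t), integral_const_mul] at optimal
  simp only [hXZ_eq, integral_const_mul] at tangent
  refine le_of_mul_le_mul_left ?_ ht.1
  linarith

lemma integral_foc_mul_sub_nonneg_of_isMinOn (ha₀ : 0 < a₀) (hρ : ∀ᵐ ω ∂P, 0 ≤ ρ ω)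
    (hX : Lpos P X) (hY : Lpos P Y) (hρX : Integrable (fun ω => ρ ω * X ω) P)
    (hρY : Integrable (fun ω => ρ ω * Y ω) P) (hXY : ∀ᵐ ω ∂P, |Y ω - X ω| ≤ c)
    (hmin : IsMinOn (robj P m a₀ a₁ ρ lam) {Y | Lpos P Y} X) :
    0 ≤ ∫ ω, (hprime P m a₀ a₁ X ω + lam * ρ ω) * (Y ω - X ω) ∂P := by
  have hlim : -(lam * ∫ ω, ρ ω * (Y ω - X ω) ∂P) ≤ ∫ ω, hprime P m a₀ a₁ X ω * (Y ω - X ω) ∂P := by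
    refine ge_of_tendsto (tendsto_integral_hprime_lineMap_mul ha₀ hX hY hXY) ?_
    filter_upwards [Ioc_mem_nhdsGT one_pos] with t ht
    exact neg_mul_integral_le_integral_hprime_lineMap ha₀ hρ hX hY hρX hρY hXY hmin ht
  have hhD : Integrable (fun ω => hprime P m a₀ a₁ X ω * (Y ω - X ω)) P :=
    (hX.integrable_hprime ha₀).mul_bdd (hY.1.sub hX.1).aestronglyMeasurable hXY
  have hρD : Integrable (fun ω => ρ ω * (Y ω - X ω)) P := by
    simp only [mul_sub]
    exact hρY.sub hρX
  simp only [add_mul, mul_assoc]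
  rw [integral_add hhD (hρD.const_mul lam), integral_const_mul]
  linarith

lemma integrable_mul_descentPayoff (ha₀ : 0 < a₀) (hlam : 0 < lam) (hmρ : Measurable ρ)
    (hρ : ∀ᵐ ω ∂P, 0 ≤ ρ ω) (hX : Lpos P X) (hρX : Integrable (fun ω => ρ ω * X ω) P) :
    Integrable
      (fun ω => ρ ω * descentPayoff (hprime P m a₀ a₁ X ω + lam * ρ ω) (X ω)) P := by
  have hY : Lpos P fun ω => descentPayoff (hprime P m a₀ a₁ X ω + lam * ρ ω) (X ω) :=
    hX.descentPayoff ((measurable_hprime hX.1).add (hmρ.const_mul lam))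
  refine (hρX.add ((hX.integrable_hprime (m := m) (a₁ := a₁) ha₀).neg.const_mul lam⁻¹)).mono'
    (hmρ.mul hY.1).aestronglyMeasurable ?_
  filter_upwards [hρ, hX.2, hY.mul_nonneg_ae hρ] with ω hρω hXω hYω
  have hh : 0 ≤ -hprime P m a₀ a₁ X ω := neg_nonneg.2 (hprime_nonpos ω)
  rw [Real.norm_of_nonneg hYω]
  simp only [Pi.add_apply, Pi.neg_apply]
  unfold descentPayoff
  split_ifs with hneg
  · have : ρ ω ≤ lam⁻¹ * -hprime P m a₀ a₁ X ω := by
      rw [le_inv_mul_iff₀ hlam]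
      linarith
    linarith [mul_add_one (ρ ω) (X ω)]
  · have hmax : max (X ω - 1) 0 ≤ X ω := max_le (by linarith) hXω
    exact (mul_le_mul_of_nonneg_left hmax hρω).trans (le_add_of_nonneg_right (by positivity))

lemma foc_of_isMinOn_robj (ha₀ : 0 < a₀) (hlam : 0 < lam) (hmρ : Measurable ρ)
    (hρ : ∀ᵐ ω ∂P, 0 ≤ ρ ω) (hX : Lpos P X)
    (hmin : IsMinOn (robj P m a₀ a₁ ρ lam) {Y | Lpos P Y} X) :
    (∀ᵐ ω ∂P, 0 ≤ hprime P m a₀ a₁ X ω + lam * ρ ω) ∧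
      ∀ᵐ ω ∂P, 0 < X ω → hprime P m a₀ a₁ X ω + lam * ρ ω = 0 := by
  set G := fun ω => hprime P m a₀ a₁ X ω + lam * ρ ω
  set Y := fun ω => descentPayoff (G ω) (X ω)
  have hG : Measurable G := (measurable_hprime hX.1).add (hmρ.const_mul lam)
  have hY : Lpos P Y := hX.descentPayoff hG
  have hρX : Integrable (fun ω => ρ ω * X ω) P := integrable_mul_of_isMinOn_robj hlam hmρ hρ hX hmin
  have hρY : Integrable (fun ω => ρ ω * Y ω) P :=
    integrable_mul_descentPayoff ha₀ hlam hmρ hρ hX hρX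
  have hXY : ∀ᵐ ω ∂P, |Y ω - X ω| ≤ 1 := hX.2.mono fun ω => abs_descentPayoff_sub_le_one
  have hint : Integrable (fun ω => G ω * (Y ω - X ω)) P := by
    have hhD : Integrable (fun ω => hprime P m a₀ a₁ X ω * (Y ω - X ω)) P :=
      (hX.integrable_hprime ha₀).mul_bdd (hY.1.sub hX.1).aestronglyMeasurable hXY
    refine (hhD.add ((hρY.sub hρX).const_mul lam)).congr (.of_forall fun ω => ?_)
    simp only [Pi.add_apply, Pi.sub_apply, G]
    ring
  have hnonpos : ∀ᵐ ω ∂P, G ω * (Y ω - X ω) ≤ 0 := hX.2.mono fun ω => mul_descentPayoff_sub_nonpos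
  have hzero : (fun ω => G ω * (Y ω - X ω)) =ᵐ[P] 0 :=
    (integral_eq_iff_of_ae_le hint (integrable_zero _ _ _) hnonpos).1 <| by
      simpa using (integral_nonpos_of_ae hnonpos).antisymm
        (integral_foc_mul_sub_nonneg_of_isMinOn ha₀ hρ hX hY hρX hρY hXY hmin)
  exact eventually_and.1 (hzero.mono fun ω => foc_of_mul_descentPayoff_sub_eq_zero)

lemma isMinOn_robj_of_foc (ha₀ : 0 < a₀) (hlam : 0 < lam) (hmρ : Measurable ρ)
    (hρ : ∀ᵐ ω ∂P, 0 ≤ ρ ω) (hX : Lpos P X)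
    (hge : ∀ᵐ ω ∂P, 0 ≤ hprime P m a₀ a₁ X ω + lam * ρ ω)
    (heq : ∀ᵐ ω ∂P, 0 < X ω → hprime P m a₀ a₁ X ω + lam * ρ ω = 0) :
    IsMinOn (robj P m a₀ a₁ ρ lam) {Y | Lpos P Y} X := by
  refine isMinOn_iff.2 fun Y hY => ?_
  by_cases htop : robj P m a₀ a₁ ρ lam Y = ⊤
  · exact htop ▸ le_top
  have hρY := integrable_mul_of_robj_ne_top hlam hmρ hρ hY htop
  have slackness := hprime_mul_self_eq_of_foc hX heq
  have hρX : Integrable (fun ω => ρ ω * X ω) P :=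
    (integrable_const_mul_iff (neg_ne_zero.2 hlam.ne').isUnit _).1
      ((hX.integrable_hprime_mul_self ha₀).congr slackness)
  have hhY : Integrable (fun ω => hprime P m a₀ a₁ X ω * Y ω) P := by
    refine (hρY.const_mul lam).mono' ((measurable_hprime hX.1).mul hY.1).aestronglyMeasurable ?_
    filter_upwards [hge, hY.2] with ω h hω
    rw [norm_mul, Real.norm_of_nonpos (hprime_nonpos ω), Real.norm_of_nonneg hω, ← mul_assoc]
    gcongr
    linarith
  have hle : ∀ᵐ ω ∂P, -lam * (ρ ω * Y ω - ρ ω * X ω)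
      ≤ hprime P m a₀ a₁ X ω * (Y ω - X ω) := by
    filter_upwards [slackness, hge, hY.2] with ω hs h hω
    linarith [mul_nonneg h hω]
  have hhYX : Integrable (fun ω => hprime P m a₀ a₁ X ω * (Y ω - X ω)) P := by
    simp only [mul_sub]
    exact hhY.sub (hX.integrable_hprime_mul_self ha₀)
  have hint : -lam * (∫ ω, ρ ω * Y ω ∂P - ∫ ω, ρ ω * X ω ∂P)
      ≤ ∫ ω, hprime P m a₀ a₁ X ω * (Y ω - X ω) ∂P := by
    rw [← integral_sub hρY hρX, ← integral_const_mul]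
    exact integral_mono_ae ((hρY.sub hρX).const_mul (-lam)) hhYX hle
  rw [robj_eq_coe hρ hX hρX, robj_eq_coe hρ hY hρY, EReal.coe_le_coe_iff]
  linarith [werm_add_integral_hprime_mul_sub_le ha₀ hX hY hhYX]

theorem risk_minimization_foc_general (ha₀ : 0 < a₀) (hlam : 0 < lam) (hmρ : Measurable ρ)
    (hρ : ∀ᵐ ω ∂P, 0 ≤ ρ ω) (hX : Lpos P X) :
    (∀ Y, Lpos P Y → robj P m a₀ a₁ ρ lam X ≤ robj P m a₀ a₁ ρ lam Y) ↔
      ((∀ᵐ ω ∂P, 0 ≤ hprime P m a₀ a₁ X ω + lam * ρ ω) ∧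
        (∀ᵐ ω ∂P, 0 < X ω → hprime P m a₀ a₁ X ω + lam * ρ ω = 0)) :=
  isMinOn_iff.symm.trans ⟨foc_of_isMinOn_robj ha₀ hlam hmρ hρ hX,
    fun foc => isMinOn_robj_of_foc ha₀ hlam hmρ hρ hX foc.1 foc.2⟩

end FirstOrderCondition

/-- first-order characterization of the minimizer of `h(X) + λ E[ρX]` over
`L⁰₊` (assuming the infimum is finite, i.e. `> -∞`): `X*` is a minimizer iff
`h′(X*) + λρ ≥ 0` a.s. and `h′(X*) + λρ = 0` a.s. on `{X* > 0}`. -/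
theorem risk_minimization_foc (P : Measure Ω) [IsProbabilityMeasure P]
    (a₀ a₁ : ℝ) (ha₀ : 0 < a₀) (ha₀₁ : a₀ < a₁)
    (m : Measure ℝ) [IsProbabilityMeasure m] (hm : m (Set.Icc a₀ a₁) = 1)
    (ρ : Ω → ℝ) (hmρ : Measurable ρ) (hρ0 : ∀ᵐ ω ∂P, 0 < ρ ω) (hρint : Integrable ρ P)
    (lam : ℝ) (hlam : 0 < lam)
    (hfin : sInf (robj P m a₀ a₁ ρ lam '' {X | Lpos P X}) ≠ (⊥ : EReal))
    (X : Ω → ℝ) (hX : Lpos P X) :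
    (∀ Y, Lpos P Y → robj P m a₀ a₁ ρ lam X ≤ robj P m a₀ a₁ ρ lam Y) ↔
      ((∀ᵐ ω ∂P, 0 ≤ hprime P m a₀ a₁ X ω + lam * ρ ω) ∧
        (∀ᵐ ω ∂P, 0 < X ω → hprime P m a₀ a₁ X ω + lam * ρ ω = 0)) :=
  risk_minimization_foc_general ha₀ hlam hmρ (hρ0.mono fun _ => le_of_lt) hX
end
end
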